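/- Let λ, x₀ > 0 and for n ∈ ℤ define g_n : ℝ≥0 → ℂ, g_n(x) = (1/√x₀) e^{(2πin/x₀ − λ)x}. Let V be the closed subspace of L²(ℝ≥0, ℂ) generated by (g_n)_{n∈ℤ}. Then (g_n)_{n∈ℤ} is a Riesz basis of V, and the restriction map B : V → L²([0,x₀], ℂ), f ↦ f|_{[0,x₀]}, is an invertible bounded linear operator. -/

import Mathlib

open MeasureTheory Set
open scoped Real

/-!
Every `g_n` satisfies `g_n(x + x₀) = q g_n(x)` with `q = e^{-λ x₀}`, and this relation passes to the
closed span `V`. Splitting `(0, ∞)` at `x₀` and translating the tail back gives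
`‖f‖² = ‖f|_{(0, x₀]}‖² + q² ‖f‖²` on `V`, so the restriction map is `√(1 - q²)` times an isometry
there. It sends `g_n` to `e^{-λx} e_n(x)`, the image of the Fourier basis of `L²((0, x₀])` under an
invertible multiplication operator. A scaled isometry whose image contains a Riesz basis is onto,
and pulls Riesz bases back to Riesz bases.
-/

theorem exists_linearIsometryEquiv_smul_eq {𝕜 E F : Type*} [RCLike 𝕜] [NormedAddCommGroup E]
    [NormedSpace 𝕜 E] [CompleteSpace E] [NormedAddCommGroup F] [NormedSpace 𝕜 F] {R : E →L[𝕜] F}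
    {c : ℝ} (hc : 0 < c) (hR : ∀ v, ‖R v‖ = c * ‖v‖) (hdense : DenseRange R) :
    ∃ J : E ≃ₗᵢ[𝕜] F, ∀ v, R v = (c : 𝕜) • J v := by
  have hc' : (c : 𝕜) ≠ 0 := RCLike.ofReal_ne_zero.2 hc.ne'
  let J : E →ₗᵢ[𝕜] F :=
    { toLinearMap := (c : 𝕜)⁻¹ • R.toLinearMap
      norm_map' := fun v => by simp [norm_smul, hR, abs_of_pos hc, hc.ne'] }
  have hJ : ∀ v, R v = (c : 𝕜) • J v := fun v => (smul_inv_smul₀ hc' (R v)).symm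
  have hsub : range R ⊆ range J := by
    rintro _ ⟨v, rfl⟩
    exact ⟨(c : 𝕜) • v, by rw [map_smul, hJ]⟩
  have hclosed : IsClosed (range J) := J.isometry.isClosedEmbedding.isClosed_range
  have hsurj : Function.Surjective J :=
    range_eq_univ.1 (hclosed.closure_eq ▸ (hdense.mono hsub).closure_eq)
  exact ⟨LinearIsometryEquiv.ofSurjective J hsurj, hJ⟩

section RieszBasis

variable {ι 𝕜 E F : Type*} [RCLike 𝕜] [NormedAddCommGroup E] [InnerProductSpace 𝕜 E]
  [NormedAddCommGroup F] [InnerProductSpace 𝕜 F]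

variable (𝕜) in
/-- A family is a Riesz basis if it is the image of a Hilbert basis (complete orthonormal family)
under an invertible bounded operator of the space. -/
def IsRieszBasis (x : ι → E) : Prop :=
  ∃ (b : HilbertBasis ι 𝕜 E) (T : E ≃L[𝕜] E), ∀ i, T (b i) = x i

namespace IsRieszBasis

theorem topologicalClosure_span_eq_top {x : ι → E} (hx : IsRieszBasis 𝕜 x) :
    (Submodule.span 𝕜 (range x)).topologicalClosure = ⊤ := by
  obtain ⟨b, T, hT⟩ := hx
  have hrange : range x = T '' range b := by
    rw [← range_comp]
    exact congrArg range (funext fun i => (hT i).symm)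
  have himage := T.surjective.denseRange.topologicalClosure_map_submodule
    (f := (T : E →L[𝕜] E)) b.dense_span
  rw [Submodule.map_span] at himage
  exact hrange ▸ himage

/-- The isometry `J` only serves to produce a Hilbert basis of the target. -/
theorem map {x : ι → E} (hx : IsRieszBasis 𝕜 x) (J : E ≃ₗᵢ[𝕜] F) (S : E ≃L[𝕜] F) :
    IsRieszBasis 𝕜 (S ∘ x) := by
  classical
  obtain ⟨b, T, hT⟩ := hx
  refine ⟨.ofRepr (J.symm.trans b.repr),
    J.symm.toContinuousLinearEquiv.trans (T.trans S), fun i => ?_⟩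
  have hb : HilbertBasis.ofRepr (J.symm.trans b.repr) i = J (b i) := by
    rw [← HilbertBasis.repr_symm_single, ← HilbertBasis.repr_symm_single]
    rfl
  simp [hb, hT]

end IsRieszBasis

theorem IsRieszBasis.of_comp_of_norm_eq_mul [CompleteSpace E] {x : ι → E} {R : E →L[𝕜] F} {c : ℝ}
    (hc : 0 < c) (hR : ∀ v, ‖R v‖ = c * ‖v‖) (hx : IsRieszBasis 𝕜 (R ∘ x)) :
    IsRieszBasis 𝕜 x ∧ ∃ B : E ≃L[𝕜] F, ∀ v, B v = R v := by
  have hdense : DenseRange R :=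
    (Submodule.dense_iff_topologicalClosure_eq_top.2 hx.topologicalClosure_span_eq_top).mono <|
      Submodule.span_le (p := LinearMap.range R.toLinearMap).2 (range_comp_subset_range x R)
  obtain ⟨J, hJ⟩ := exists_linearIsometryEquiv_smul_eq hc hR hdense
  let B : E ≃L[𝕜] F := J.toContinuousLinearEquiv.trans
    (ContinuousLinearEquiv.smulLeft (Units.mk0 (c : 𝕜) (RCLike.ofReal_ne_zero.2 hc.ne')))
  have hB : ∀ v, B v = R v := fun v => (hJ v).symm
  have hx' : B.symm ∘ R ∘ x = x := funext fun i => by simp [← hB]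
  exact ⟨hx' ▸ hx.map J.symm B.symm, B, hB⟩

end RieszBasis

section Parseval

variable {ι 𝕜 E : Type*} [RCLike 𝕜] [NormedAddCommGroup E] [InnerProductSpace 𝕜 E] {v : ι → E}

/-- Parseval's identity for `v j` itself leaves no room for a nonzero `⟪v i, v j⟫`, `i ≠ j`. -/
theorem orthonormal_of_hasSum_sq_norm_inner (hv : ∀ i, ‖v i‖ = 1)
    (hsum : ∀ f, HasSum (fun i => ‖inner 𝕜 (v i) f‖ ^ 2) (‖f‖ ^ 2)) : Orthonormal 𝕜 v := by
  classical
  refine ⟨hv, fun i j hij => ?_⟩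
  have hpair : ∑ k ∈ {i, j}, ‖inner 𝕜 (v k) (v j)‖ ^ 2 ≤ ‖v j‖ ^ 2 :=
    sum_le_hasSum _ (fun _ _ => sq_nonneg _) (hsum (v j))
  rw [Finset.sum_pair hij, inner_self_eq_norm_sq_to_K, hv j] at hpair
  have hzero : ‖inner 𝕜 (v i) (v j)‖ ^ 2 ≤ 0 := by simpa using hpair
  exact norm_eq_zero.1 (pow_eq_zero_iff two_ne_zero |>.1 (hzero.antisymm (sq_nonneg _)))

theorem orthogonal_span_eq_bot_of_hasSum_sq_norm_inner
    (hsum : ∀ f, HasSum (fun i => ‖inner 𝕜 (v i) f‖ ^ 2) (‖f‖ ^ 2)) :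
    (Submodule.span 𝕜 (range v))ᗮ = ⊥ := by
  refine (Submodule.eq_bot_iff _).2 fun f hf => ?_
  have hinner : ∀ i, inner 𝕜 (v i) f = 0 := fun i =>
    (Submodule.mem_orthogonal _ _).1 hf _ (Submodule.subset_span (mem_range_self i))
  have hnorm : ‖f‖ ^ 2 = 0 := (hsum f).unique (by simp [hinner, hasSum_zero])
  simpa using hnorm

end Parseval

section Composition

variable {α β E 𝕜 : Type*} [MeasurableSpace α] [MeasurableSpace β] [NormedAddCommGroup E]
  {μ : Measure α} {ν : Measure β} {φ : α → β}

theorem memLp_comp_of_map_le {p : ENNReal} {f : β → E} (hf : MemLp f p ν) (hφ : Measurable φ)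
    (hle : μ.map φ ≤ ν) : MemLp (f ∘ φ) p μ :=
  (hf.mono_measure hle).comp_of_map hφ.aemeasurable

theorem quasiMeasurePreserving_of_map_le (hφ : Measurable φ) (hle : μ.map φ ≤ ν) :
    Measure.QuasiMeasurePreserving φ μ ν :=
  ⟨hφ, hle.absolutelyContinuous⟩

variable [NontriviallyNormedField 𝕜] [NormedSpace 𝕜 E] {p : ENNReal} [Fact (1 ≤ p)]

variable (E 𝕜 p) in
/-- The composition operator `f ↦ f ∘ φ` from `Lᵖ(ν)` to `Lᵖ(μ)`. Restrictions (`φ = id`, `μ ≤ ν`)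
and translations are both of this form. -/
noncomputable def lpCompCLM (hφ : Measurable φ) (hle : μ.map φ ≤ ν) : Lp E p ν →L[𝕜] Lp E p μ :=
  LinearMap.mkContinuous
    { toFun := fun f => (memLp_comp_of_map_le (Lp.memLp f) hφ hle).toLp _
      map_add' := fun f g => by
        rw [← MemLp.toLp_add]
        exact MemLp.toLp_congr _ _
          ((quasiMeasurePreserving_of_map_le hφ hle).ae_eq_comp (Lp.coeFn_add f g))
      map_smul' := fun c f => by
        rw [RingHom.id_apply, ← MemLp.toLp_const_smul]
        exact MemLp.toLp_congr _ _
          ((quasiMeasurePreserving_of_map_le hφ hle).ae_eq_comp (Lp.coeFn_smul c f)) }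
    1 fun f => by
      rw [one_mul, Lp.norm_def f]
      refine (Lp.norm_toLp _ (memLp_comp_of_map_le (Lp.memLp f) hφ hle)).trans_le
        (ENNReal.toReal_mono (Lp.eLpNorm_ne_top f) ?_)
      rw [← eLpNorm_map_measure ((Lp.aestronglyMeasurable f).mono_measure hle) hφ.aemeasurable]
      exact eLpNorm_mono_measure f hle

variable (𝕜) in
theorem coeFn_lpCompCLM (hφ : Measurable φ) (hle : μ.map φ ≤ ν) (f : Lp E p ν) :
    lpCompCLM E 𝕜 p hφ hle f =ᵐ[μ] f ∘ φ :=
  MemLp.coeFn_toLp (memLp_comp_of_map_le (Lp.memLp f) hφ hle)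

end Composition

section L2Norm

variable {α β γ E 𝕜 : Type*} [MeasurableSpace α] [MeasurableSpace β] [MeasurableSpace γ]
  [NormedAddCommGroup E] {μ : Measure α} {μ' : Measure γ} {ν : Measure β}

theorem lp_two_norm_sq_eq_integral (f : Lp E 2 ν) : ‖f‖ ^ 2 = ∫ x, ‖f x‖ ^ 2 ∂ν := by
  have hnorm : ‖f‖ = (∫ x, ‖f x‖ ^ 2 ∂ν) ^ ((2 : ℕ) : ℝ)⁻¹ := by
    rw [Lp.norm_def, toReal_eLpNorm (Lp.aestronglyMeasurable f),
      lpNorm_eq_integral_norm_rpow_toReal two_ne_zero ENNReal.ofNat_ne_top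
        (Lp.aestronglyMeasurable f)]
    simp
  rw [hnorm, Real.rpow_inv_natCast_pow (integral_nonneg fun _ => sq_nonneg _) two_ne_zero]

variable [NontriviallyNormedField 𝕜] [NormedSpace 𝕜 E]

theorem norm_sq_lpCompCLM {φ : α → β} (hφ : Measurable φ) (hle : μ.map φ ≤ ν) (f : Lp E 2 ν) :
    ‖lpCompCLM E 𝕜 2 hφ hle f‖ ^ 2 = ∫ x, ‖f x‖ ^ 2 ∂μ.map φ := by
  have hmeas : AEStronglyMeasurable (fun x => ‖f x‖ ^ 2) (μ.map φ) :=
    ((Lp.aestronglyMeasurable f).mono_measure hle).norm.pow 2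
  rw [lp_two_norm_sq_eq_integral, integral_map hφ.aemeasurable hmeas]
  refine integral_congr_ae ?_
  filter_upwards [coeFn_lpCompCLM 𝕜 hφ hle f] with x hx
  rw [hx, Function.comp_apply]

theorem norm_sq_eq_norm_sq_lpCompCLM_add {φ : α → β} {ψ : γ → β} (hφ : Measurable φ)
    (hψ : Measurable ψ) (hφle : μ.map φ ≤ ν) (hψle : μ'.map ψ ≤ ν)
    (hν : ν = μ.map φ + μ'.map ψ) (f : Lp E 2 ν) :
    ‖f‖ ^ 2 = ‖lpCompCLM E 𝕜 2 hφ hφle f‖ ^ 2 + ‖lpCompCLM E 𝕜 2 hψ hψle f‖ ^ 2 := by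
  have hint : Integrable (fun x => ‖f x‖ ^ 2) ν := (Lp.memLp f).integrable_norm_pow two_ne_zero
  rw [norm_sq_lpCompCLM, norm_sq_lpCompCLM,
    ← integral_add_measure (hint.mono_measure hφle) (hint.mono_measure hψle), ← hν,
    lp_two_norm_sq_eq_integral]

end L2Norm

section HalfLine

variable {E 𝕜 : Type*} [NormedAddCommGroup E] [NontriviallyNormedField 𝕜] [NormedSpace 𝕜 E]
  {a b : ℝ}

theorem map_id_restrict_Ioc_le :
    (volume.restrict (Ioc a b)).map id ≤ volume.restrict (Ioi a) := by
  rw [Measure.map_id]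
  exact Measure.restrict_mono Ioc_subset_Ioi_self le_rfl

theorem map_add_right_restrict_Ioi (t : ℝ) :
    (volume.restrict (Ioi a)).map (· + t) = volume.restrict (Ioi (a + t)) := by
  have h := (measurePreserving_add_right volume t).restrict_preimage
    (measurableSet_Ioi (a := a + t))
  rw [preimage_add_const_Ioi, add_sub_cancel_right] at h
  exact h.map_eq

theorem map_add_right_restrict_Ioi_le {t : ℝ} (ht : 0 ≤ t) :
    (volume.restrict (Ioi a)).map (· + t) ≤ volume.restrict (Ioi a) := by
  rw [map_add_right_restrict_Ioi]
  exact Measure.restrict_mono (Ioi_subset_Ioi (le_add_of_nonneg_right ht)) le_rfl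

variable (E 𝕜 a b) in
/-- The restriction map `L²((a, ∞)) → L²((a, b])`. -/
noncomputable def restrictIoc :
    Lp E 2 (volume.restrict (Ioi a)) →L[𝕜] Lp E 2 (volume.restrict (Ioc a b)) :=
  lpCompCLM E 𝕜 2 measurable_id map_id_restrict_Ioc_le

variable (E 𝕜 a) in
/-- The left translation `f ↦ f(· + t)` on `L²((a, ∞))`, for `t ≥ 0`. -/
noncomputable def shiftIoi {t : ℝ} (ht : 0 ≤ t) :
    Lp E 2 (volume.restrict (Ioi a)) →L[𝕜] Lp E 2 (volume.restrict (Ioi a)) :=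
  lpCompCLM E 𝕜 2 (measurable_add_const t) (map_add_right_restrict_Ioi_le ht)

variable (𝕜 b) in
theorem coeFn_restrictIoc (f : Lp E 2 (volume.restrict (Ioi a))) :
    restrictIoc E 𝕜 a b f =ᵐ[volume.restrict (Ioc a b)] f :=
  coeFn_lpCompCLM 𝕜 measurable_id map_id_restrict_Ioc_le f

theorem shiftIoi_eq_smul {t : ℝ} (ht : 0 ≤ t) {f : Lp E 2 (volume.restrict (Ioi a))}
    {g : ℝ → E} {q : 𝕜} (hfg : f =ᵐ[volume.restrict (Ioi a)] g) (hg : ∀ x, g (x + t) = q • g x) :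
    shiftIoi E 𝕜 a ht f = q • f := by
  have hle := map_add_right_restrict_Ioi_le (a := a) ht
  have hshift := (quasiMeasurePreserving_of_map_le (measurable_add_const t) hle).ae_eq_comp hfg
  refine Lp.ext ?_
  filter_upwards [coeFn_lpCompCLM 𝕜 (measurable_add_const t) hle f, hshift, hfg,
    Lp.coeFn_smul q f] with x hx hgx hfx hqx
  rw [shiftIoi, hx, hgx, hqx, Function.comp_apply, hg, Pi.smul_apply, hfx]

theorem norm_sq_eq_norm_sq_restrictIoc_add (hab : a ≤ b) (f : Lp E 2 (volume.restrict (Ioi a))) :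
    ‖f‖ ^ 2 = ‖restrictIoc E 𝕜 a b f‖ ^ 2 + ‖shiftIoi E 𝕜 a (sub_nonneg.2 hab) f‖ ^ 2 := by
  refine norm_sq_eq_norm_sq_lpCompCLM_add _ _ _ _ ?_ f
  rw [Measure.map_id, map_add_right_restrict_Ioi, add_sub_cancel, ← Ioc_union_Ioi_eq_Ioi hab,
    Measure.restrict_union (Ioc_disjoint_Ioi le_rfl) measurableSet_Ioi]

theorem norm_restrictIoc_of_shiftIoi_eq_smul (hab : a ≤ b) {f : Lp E 2 (volume.restrict (Ioi a))}
    {q : 𝕜} (hf : shiftIoi E 𝕜 a (sub_nonneg.2 hab) f = q • f) :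
    ‖restrictIoc E 𝕜 a b f‖ = √(1 - ‖q‖ ^ 2) * ‖f‖ := by
  have hsq : ‖restrictIoc E 𝕜 a b f‖ ^ 2 = (1 - ‖q‖ ^ 2) * ‖f‖ ^ 2 := by
    have hsplit := norm_sq_eq_norm_sq_restrictIoc_add (𝕜 := 𝕜) hab f
    rw [hf, norm_smul] at hsplit
    linarith
  rw [← Real.sqrt_sq (norm_nonneg (restrictIoc E 𝕜 a b f)), hsq, Real.sqrt_mul' _ (sq_nonneg _),
    Real.sqrt_sq (norm_nonneg f)]

end HalfLine

section Multiplication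

variable {α 𝕜 E : Type*} [MeasurableSpace α] {μ : Measure α} [NontriviallyNormedField 𝕜]
  [NormedAddCommGroup E] [NormedSpace 𝕜 E] {p : ENNReal} [Fact (1 ≤ p)] {φ : α → 𝕜}

variable (E p) in
/-- Multiplication by `φ ∈ L^∞(μ)` as a bounded operator of `Lᵖ(μ)`. -/
noncomputable def lpSMulCLM (hφ : MemLp φ ⊤ μ) : Lp E p μ →L[𝕜] Lp E p μ :=
  (ContinuousLinearMap.lsmul 𝕜 𝕜).holderL μ ⊤ p p (hφ.toLp φ)

theorem coeFn_lpSMulCLM (hφ : MemLp φ ⊤ μ) (f : Lp E p μ) :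
    lpSMulCLM E p hφ f =ᵐ[μ] fun x => φ x • f x := by
  filter_upwards [(ContinuousLinearMap.lsmul 𝕜 𝕜).coeFn_holder (r := p) (hφ.toLp φ) f,
    hφ.coeFn_toLp] with x hx hφx
  exact hx.trans (by rw [hφx, ContinuousLinearMap.lsmul_apply])

theorem lpSMulCLM_lpSMulCLM_of_mul_eq_one {ψ : α → 𝕜} (hφ : MemLp φ ⊤ μ) (hψ : MemLp ψ ⊤ μ)
    (hφψ : ∀ x, φ x * ψ x = 1) (f : Lp E p μ) : lpSMulCLM E p hφ (lpSMulCLM E p hψ f) = f := by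
  refine Lp.ext ?_
  filter_upwards [coeFn_lpSMulCLM hφ (lpSMulCLM E p hψ f), coeFn_lpSMulCLM hψ f] with x hφx hψx
  rw [hφx, hψx, smul_smul, hφψ, one_smul]

variable (E p) in
/-- Multiplication by a function that is bounded together with its inverse, as an invertible
bounded operator of `Lᵖ(μ)`. -/
noncomputable def lpSMulEquiv {ψ : α → 𝕜} (hφ : MemLp φ ⊤ μ) (hψ : MemLp ψ ⊤ μ)
    (hφψ : ∀ x, φ x * ψ x = 1) : Lp E p μ ≃L[𝕜] Lp E p μ :=
  .equivOfInverse (lpSMulCLM E p hφ) (lpSMulCLM E p hψ)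
    (lpSMulCLM_lpSMulCLM_of_mul_eq_one hψ hφ fun x => mul_comm (ψ x) (φ x) ▸ hφψ x)
    (lpSMulCLM_lpSMulCLM_of_mul_eq_one hφ hψ hφψ)

theorem coeFn_lpSMulEquiv {ψ : α → 𝕜} (hφ : MemLp φ ⊤ μ) (hψ : MemLp ψ ⊤ μ)
    (hφψ : ∀ x, φ x * ψ x = 1) (f : Lp E p μ) :
    lpSMulEquiv E p hφ hψ hφψ f =ᵐ[μ] fun x => φ x • f x :=
  coeFn_lpSMulCLM hφ f

end Multiplication

theorem memLp_top_restrict_Ioc_of_continuous {E : Type*} [NormedAddCommGroup E] {φ : ℝ → E}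
    (hφ : Continuous φ) (a b : ℝ) : MemLp φ ⊤ (volume.restrict (Ioc a b)) := by
  obtain ⟨C, hC⟩ := isCompact_Icc.exists_bound_of_continuousOn (hφ.continuousOn (s := Icc a b))
  exact memLp_top_of_bound hφ.aestronglyMeasurable C <|
    ae_restrict_of_forall_mem measurableSet_Ioc fun x hx => hC x (Ioc_subset_Icc_self hx)

section Fourier

variable {a b : ℝ}

/-- The function `x ↦ (b - a)^{-1/2} e^{2πinx/(b - a)}` as an element of `L²((a, b])`. -/
noncomputable def fourierIoc (a b : ℝ) (n : ℤ) : Lp ℂ 2 (volume.restrict (Ioc a b)) :=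
  ((memLp_top_restrict_Ioc_of_continuous
    (φ := fun x => (√(b - a) : ℂ)⁻¹ * fourier n (x : AddCircle (b - a)))
    (by fun_prop) a b).mono_exponent le_top).toLp _

theorem coeFn_fourierIoc (n : ℤ) : fourierIoc a b n =ᵐ[volume.restrict (Ioc a b)]
    fun x => (√(b - a) : ℂ)⁻¹ * fourier n (x : AddCircle (b - a)) :=
  MemLp.coeFn_toLp _

theorem norm_fourierIoc (hab : a < b) (n : ℤ) : ‖fourierIoc a b n‖ = 1 := by
  have hpos : 0 < b - a := sub_pos.2 hab
  have hsq : ‖fourierIoc a b n‖ ^ 2 = ∫ _ in Ioc a b, (b - a)⁻¹ := by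
    rw [lp_two_norm_sq_eq_integral]
    refine integral_congr_ae ?_
    filter_upwards [coeFn_fourierIoc n] with x hx
    rw [hx, norm_mul, fourier_apply, Circle.norm_coe, mul_one, norm_inv, Complex.norm_real, inv_pow,
      Real.norm_eq_abs, sq_abs, Real.sq_sqrt hpos.le]
  rw [← sq_eq_sq₀ (norm_nonneg _) zero_le_one, hsq]
  simp [hpos.le, hpos.ne']

theorem inner_fourierIoc (hab : a < b) (n : ℤ) (f : Lp ℂ 2 (volume.restrict (Ioc a b))) :
    inner ℂ (fourierIoc a b n) f = √(b - a) * fourierCoeffOn hab f n := by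
  have hscale : ((√(b - a) : ℝ) : ℂ) * ((1 / (b - a) : ℝ) : ℂ) = (√(b - a) : ℂ)⁻¹ := by
    rw [← Complex.ofReal_mul, mul_one_div, Real.sqrt_div_self, Complex.ofReal_inv]
  rw [fourierCoeffOn_eq_integral, intervalIntegral.integral_of_le hab.le, Complex.real_smul,
    ← mul_assoc, hscale, ← integral_const_mul, L2.inner_def]
  refine integral_congr_ae ?_
  filter_upwards [coeFn_fourierIoc n] with x hx
  rw [hx, RCLike.inner_apply, map_mul, fourier_neg, map_inv₀, Complex.conj_ofReal, smul_eq_mul]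
  ring

theorem hasSum_sq_norm_inner_fourierIoc (hab : a < b) (f : Lp ℂ 2 (volume.restrict (Ioc a b))) :
    HasSum (fun n => ‖inner ℂ (fourierIoc a b n) f‖ ^ 2) (‖f‖ ^ 2) := by
  have hpos : 0 < b - a := sub_pos.2 hab
  have hparseval := (hasSum_sq_fourierCoeffOn hab (Lp.memLp f)).mul_left (b - a)
  rw [intervalIntegral.integral_of_le hab.le, ← lp_two_norm_sq_eq_integral, smul_eq_mul,
    mul_inv_cancel_left₀ hpos.ne'] at hparseval
  refine hparseval.congr_fun fun n => ?_
  rw [inner_fourierIoc hab, norm_mul, mul_pow, Complex.norm_real, Real.norm_eq_abs, sq_abs,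
    Real.sq_sqrt hpos.le]

/-- The Fourier basis of `L²((a, b])`. -/
noncomputable def fourierBasisIoc (hab : a < b) :
    HilbertBasis ℤ ℂ (Lp ℂ 2 (volume.restrict (Ioc a b))) :=
  .mkOfOrthogonalEqBot
    (orthonormal_of_hasSum_sq_norm_inner (norm_fourierIoc hab)
      (hasSum_sq_norm_inner_fourierIoc hab))
    (orthogonal_span_eq_bot_of_hasSum_sq_norm_inner (hasSum_sq_norm_inner_fourierIoc hab))

theorem coe_fourierBasisIoc (hab : a < b) : ⇑(fourierBasisIoc hab) = fourierIoc a b :=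
  HilbertBasis.coe_mkOfOrthogonalEqBot _ _

end Fourier

section DampedExponential

/-- The damped exponential `g_n(x) = T^{-1/2} e^{(2πin/T - λ)x}`. -/
noncomputable def dampedExp (lam T : ℝ) (n : ℤ) (x : ℝ) : ℂ :=
  (√T : ℂ)⁻¹ * Complex.exp ((2 * π * Complex.I * n / T - lam) * x)

theorem dampedExp_eq_exp_mul_fourier (lam T : ℝ) (n : ℤ) (x : ℝ) :
    dampedExp lam T n x =
      Complex.exp (-(lam * x)) * ((√T : ℂ)⁻¹ * fourier n (x : AddCircle T)) := by
  rw [dampedExp, fourier_coe_apply, mul_left_comm, ← Complex.exp_add]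
  ring_nf

theorem dampedExp_add_period (lam T : ℝ) (n : ℤ) (x : ℝ) :
    dampedExp lam T n (x + T) = (Real.exp (-(lam * T)) : ℂ) * dampedExp lam T n x := by
  rw [dampedExp_eq_exp_mul_fourier, dampedExp_eq_exp_mul_fourier, AddCircle.coe_add_period,
    Complex.ofReal_exp, ← mul_assoc (Complex.exp _) (Complex.exp _), ← Complex.exp_add]
  push_cast
  ring_nf

theorem isRieszBasis_restrictIoc_dampedExp {a b : ℝ} (hab : a < b) (lam : ℝ)
    {G : ℤ → Lp ℂ 2 (volume.restrict (Ioi a))}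
    (hG : ∀ n, G n =ᵐ[volume.restrict (Ioi a)] dampedExp lam (b - a) n) :
    IsRieszBasis ℂ fun n => restrictIoc ℂ ℂ a b (G n) := by
  have hexp (s : ℝ) : MemLp (fun x : ℝ => Complex.exp (s * x)) ⊤ (volume.restrict (Ioc a b)) :=
    memLp_top_restrict_Ioc_of_continuous (by fun_prop) a b
  have hinv (x : ℝ) : Complex.exp (↑(-lam) * x) * Complex.exp (lam * x) = 1 := by
    simp [← Complex.exp_add]
  refine ⟨fourierBasisIoc hab, lpSMulEquiv ℂ 2 (hexp (-lam)) (hexp lam) hinv, fun n => Lp.ext ?_⟩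
  rw [coe_fourierBasisIoc]
  filter_upwards [coeFn_lpSMulEquiv (hexp (-lam)) (hexp lam) hinv (fourierIoc a b n),
    coeFn_fourierIoc n, coeFn_restrictIoc ℂ b (G n),
    ae_restrict_of_ae_restrict_of_subset Ioc_subset_Ioi_self (hG n)] with x hM he hR hGx
  rw [hM, hR, hGx, he, dampedExp_eq_exp_mul_fourier, smul_eq_mul, Complex.ofReal_neg, neg_mul]

theorem norm_restrictIoc_of_mem_closure_span_dampedExp {a b : ℝ} (hab : a ≤ b) (lam : ℝ)
    {G : ℤ → Lp ℂ 2 (volume.restrict (Ioi a))}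
    (hG : ∀ n, G n =ᵐ[volume.restrict (Ioi a)] dampedExp lam (b - a) n)
    {f : Lp ℂ 2 (volume.restrict (Ioi a))}
    (hf : f ∈ (Submodule.span ℂ (range G)).topologicalClosure) :
    ‖restrictIoc ℂ ℂ a b f‖ = √(1 - Real.exp (-(lam * (b - a))) ^ 2) * ‖f‖ := by
  set q := Real.exp (-(lam * (b - a)))
  let S := shiftIoi ℂ ℂ a (sub_nonneg.2 hab)
  let Q : Lp ℂ 2 (volume.restrict (Ioi a)) →L[ℂ] Lp ℂ 2 (volume.restrict (Ioi a)) :=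
    (q : ℂ) • ContinuousLinearMap.id ℂ _
  have hgen : EqOn S Q (range G) := by
    rintro _ ⟨n, rfl⟩
    exact shiftIoi_eq_smul _ (hG n) (dampedExp_add_period lam (b - a) n)
  have hS : S f = (q : ℂ) • f := ContinuousLinearMap.eqOn_closure_span hgen hf
  simpa using norm_restrictIoc_of_shiftIoi_eq_smul hab hS

end DampedExponential

/-- with `g_n(x) = (1/√x₀) e^{(2πin/x₀ − λ)x}` (realized as
elements `G n` of `L²((0,∞), ℂ)`) and `V` the closed subspace generated by the
`g_n`, the family `(g_n)_{n∈ℤ}` is a Riesz basis of `V` (the image of an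
orthonormal basis under an invertible bounded operator), and the restriction
map `B : V → L²((0,x₀], ℂ)` is an invertible bounded linear operator. -/
theorem stmt16 (lam x₀ : ℝ) (hlam : 0 < lam) (hx₀ : 0 < x₀)
    (G : ℤ → Lp ℂ 2 (volume.restrict (Ioi (0:ℝ))))
    (hG : ∀ n : ℤ, (G n : ℝ → ℂ) =ᵐ[volume.restrict (Ioi (0:ℝ))]
      fun x => (Real.sqrt x₀ : ℂ)⁻¹ *
        Complex.exp ((2 * (π : ℂ) * Complex.I * (n : ℂ) / (x₀ : ℂ) - (lam : ℂ)) * (x : ℂ))) :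
    ∃ (b : HilbertBasis ℤ ℂ ((Submodule.span ℂ (Set.range G)).topologicalClosure))
      (T : ((Submodule.span ℂ (Set.range G)).topologicalClosure : Submodule ℂ _) ≃L[ℂ]
        ((Submodule.span ℂ (Set.range G)).topologicalClosure : Submodule ℂ _)),
      (∀ n : ℤ, ((T (b n) : (Submodule.span ℂ (Set.range G)).topologicalClosure) :
          Lp ℂ 2 (volume.restrict (Ioi (0:ℝ)))) = G n) ∧
      ∃ B : ((Submodule.span ℂ (Set.range G)).topologicalClosure : Submodule ℂ _) ≃L[ℂ]
          Lp ℂ 2 (volume.restrict (Ioc (0:ℝ) x₀)),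
        ∀ f : ((Submodule.span ℂ (Set.range G)).topologicalClosure : Submodule ℂ _),
          ((B f : Lp ℂ 2 (volume.restrict (Ioc (0:ℝ) x₀))) : ℝ → ℂ)
            =ᵐ[volume.restrict (Ioc (0:ℝ) x₀)]
          ((f : Lp ℂ 2 (volume.restrict (Ioi (0:ℝ)))) : ℝ → ℂ) := by
  set V := (Submodule.span ℂ (Set.range G)).topologicalClosure
  let g : ℤ → V := fun n =>
    ⟨G n, Submodule.le_topologicalClosure _ (Submodule.subset_span (mem_range_self n))⟩
  let R : V →L[ℂ] Lp ℂ 2 (volume.restrict (Ioc (0 : ℝ) x₀)) :=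
    (restrictIoc ℂ ℂ 0 x₀).comp V.subtypeL
  have hG' : ∀ n, G n =ᵐ[volume.restrict (Ioi 0)] dampedExp lam (x₀ - 0) n := by
    rw [sub_zero]
    exact hG
  let q := Real.exp (-(lam * (x₀ - 0)))
  have hq : q < 1 := Real.exp_lt_one_iff.2 (by simpa using mul_pos hlam hx₀)
  have hc : 0 < √(1 - q ^ 2) :=
    Real.sqrt_pos.2 (sub_pos.2 (pow_lt_one₀ (Real.exp_pos _).le hq two_ne_zero))
  have hnorm (f : V) : ‖R f‖ = √(1 - q ^ 2) * ‖f‖ :=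
    norm_restrictIoc_of_mem_closure_span_dampedExp hx₀.le lam hG' f.2
  have hRg : IsRieszBasis ℂ (R ∘ g) := isRieszBasis_restrictIoc_dampedExp hx₀ lam hG'
  obtain ⟨⟨b, T, hT⟩, B, hB⟩ := IsRieszBasis.of_comp_of_norm_eq_mul hc hnorm hRg
  refine ⟨b, T, fun n => congrArg Subtype.val (hT n), B, fun f => ?_⟩
  rw [hB]
  exact coeFn_restrictIoc ℂ x₀ f.1
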